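/- Stability of the fully discrete bulk–surface Lie splitting (Lemma 4.2, linear case): Assume the weak CFL condition 7 c_inv c_M τ < 3 h. Then for every n ≥ 0 the iterates of the Lie splitting scheme satisfy ‖u^{n+1}‖_A² + ‖p^{n+1}‖_{A_Γ}² + τ · Σ_{k=0}^{n} (1 − 4 c_M h − c_{α,M} τ h − c_A τ h⁻¹) ‖∂_τ p^{k+1}‖_{M_Γ}² ≤ ‖u⁰‖_A² + ‖p⁰‖_{A_Γ}² + 2τ ‖∂_τ p⁰‖_{M₂₂}² + τ · Σ_{k=0}^{n} ( ‖f_Ω^{k+1}‖_{M⁻¹}² + ‖f_Γ^{k+1}‖_{M_Γ⁻¹}² ). -/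

import Mathlib

/-!
With `u = (u₁, p)`, `v = (∂_τ u₁ⁿ⁺¹, ∂_τ pⁿ⁺¹)`, `z = ∂_τ pⁿ⁺¹`, `q = ∂_τ pⁿ` and `J z = (0, z)`,
one splitting step is the implicit Euler step of the coupled system up to lagged surface terms:
`M (v - J (z - q)) + A (uⁿ⁺¹ - τ J z) + J (M_Γ z + A_Γ pⁿ⁺¹) = f_Ω + J f_Γ`.
Testing with `2τ v`, the polarization identity turns the lag in `p` into the defect `τ² ‖z‖²_{A₂₂}`
and the lag in `∂_τ p` into `τ ‖z - q‖²_{M₂₂} ≤ 2τ ‖z‖²_{M₂₂} + 2τ ‖q‖²_{M₂₂}`, while Young's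
inequality lets `τ ‖v‖²_M` and half of `2τ ‖z‖²_{M_Γ}` absorb the data. Including
`2τ ‖∂_τ p‖²_{M₂₂}` in the energy makes the resulting inequalities telescope; the mass and inverse
estimates bound the remaining defects by multiples of `τ ‖z‖²_{M_Γ}`.
-/

open Matrix Finset

/-- The squared "energy" norm `‖x‖_S² = xᵀ S x` induced by a matrix `S`. -/
noncomputable def vecNormSq {ι : Type*} [Fintype ι] (S : Matrix ι ι ℝ) (x : ι → ℝ) : ℝ :=
  x ⬝ᵥ S.mulVec x

section EnergyNorm

variable {ι : Type*} [Fintype ι] {S : Matrix ι ι ℝ}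

lemma vecNormSq_nonneg (hS : S.PosSemidef) (x : ι → ℝ) : 0 ≤ vecNormSq S x := by
  simpa [vecNormSq] using hS.dotProduct_mulVec_nonneg x

lemma vecNormSq_sub_le (hS : S.PosSemidef) (x y : ι → ℝ) :
    vecNormSq S (x - y) ≤ 2 * vecNormSq S x + 2 * vecNormSq S y := by
  have parallelogram :
      vecNormSq S (x + y) + vecNormSq S (x - y) = 2 * vecNormSq S x + 2 * vecNormSq S y := by
    simp only [vecNormSq, mulVec_add, mulVec_sub, dotProduct_add, dotProduct_sub, add_dotProduct,
      sub_dotProduct]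
    ring
  linarith [vecNormSq_nonneg hS (x + y)]

lemma vecNormSq_zero : vecNormSq S 0 = 0 := by
  rw [vecNormSq, zero_dotProduct]

lemma vecNormSq_smul (c : ℝ) (x : ι → ℝ) : vecNormSq S (c • x) = c ^ 2 * vecNormSq S x := by
  simp only [vecNormSq, mulVec_smul, dotProduct_smul, smul_dotProduct, smul_eq_mul]
  ring

lemma dotProduct_mulVec_comm_of_isSymm {R : Type*} [CommSemiring R] {S : Matrix ι ι R}
    (hS : S.IsSymm) (x y : ι → R) :
    x ⬝ᵥ S *ᵥ y = y ⬝ᵥ S *ᵥ x := by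
  simpa only [hS.eq] using dotProduct_transpose_mulVec S x y

lemma two_mul_sub_dotProduct_mulVec_sub (hS : S.IsSymm) (x y z : ι → ℝ) :
    2 * ((x - y) ⬝ᵥ S *ᵥ (x - z)) =
      vecNormSq S x - vecNormSq S y - vecNormSq S z + vecNormSq S (x - y - z) := by
  simp only [vecNormSq, mulVec_sub, dotProduct_sub, sub_dotProduct]
  linear_combination dotProduct_mulVec_comm_of_isSymm hS x y -
    dotProduct_mulVec_comm_of_isSymm hS x z + dotProduct_mulVec_comm_of_isSymm hS y z

lemma vecNormSq_sub_sub_le_two_mul_dotProduct (hS : S.PosSemidef) (x y z : ι → ℝ) :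
    vecNormSq S x - vecNormSq S y - vecNormSq S z ≤ 2 * ((x - y) ⬝ᵥ S *ᵥ (x - z)) := by
  rw [two_mul_sub_dotProduct_mulVec_sub (isHermitian_iff_isSymm.mp hS.isHermitian)]
  linarith [vecNormSq_nonneg hS (x - y - z)]

lemma two_mul_dotProduct_le_vecNormSq_add_vecNormSq_inv [DecidableEq ι] (hS : S.PosDef)
    (x f : ι → ℝ) : 2 * (x ⬝ᵥ f) ≤ vecNormSq S x + vecNormSq S⁻¹ f := by
  have mul_inv_f : S *ᵥ (S⁻¹ *ᵥ f) = f := by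
    rw [mulVec_mulVec, mul_nonsing_inv _ hS.det_pos.ne'.isUnit, one_mulVec]
  have vecNormSq_inv_f : vecNormSq S (S⁻¹ *ᵥ f) = vecNormSq S⁻¹ f := by
    rw [vecNormSq, vecNormSq, mul_inv_f, dotProduct_comm]
  have completed_square :=
    two_mul_sub_dotProduct_mulVec_sub (isHermitian_iff_isSymm.mp hS.isHermitian)
      x 0 (x - S⁻¹ *ᵥ f)
  rw [sub_zero, sub_sub_cancel, mul_inv_f, vecNormSq_inv_f, vecNormSq_zero] at completed_square
  linarith [vecNormSq_nonneg hS.posSemidef (x - S⁻¹ *ᵥ f)]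

end EnergyNorm

lemma add_sum_range_le_add_sum_range {α : Type*} [AddCommMonoid α] [PartialOrder α]
    [IsOrderedAddMonoid α] {E D F : ℕ → α} (step : ∀ k, E (k + 1) + D k ≤ E k + F k) (n : ℕ) :
    E n + ∑ k ∈ range n, D k ≤ E 0 + ∑ k ∈ range n, F k := by
  induction n with
  | zero => simp
  | succ n ih =>
    rw [sum_range_succ, sum_range_succ]
    calc E (n + 1) + (∑ k ∈ range n, D k + D n)
        = (E (n + 1) + D n) + ∑ k ∈ range n, D k := by ac_rfl
      _ ≤ (E n + F n) + ∑ k ∈ range n, D k := add_le_add (step n) le_rfl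
      _ = (E n + ∑ k ∈ range n, D k) + F n := by ac_rfl
      _ ≤ (E 0 + ∑ k ∈ range n, F k) + F n := add_le_add ih le_rfl
      _ = E 0 + (∑ k ∈ range n, F k + F n) := by ac_rfl

section Blocks

variable {m n : Type*} [Fintype m] [Fintype n] {M A : Matrix (m ⊕ n) (m ⊕ n) ℝ}

lemma mulVec_sumElim {R l o : Type*} [NonUnitalNonAssocSemiring R] (S : Matrix (l ⊕ o) (m ⊕ n) R)
    (x : m → R) (y : n → R) :
    S *ᵥ Sum.elim x y =
      Sum.elim (S.toBlocks₁₁ *ᵥ x + S.toBlocks₁₂ *ᵥ y) (S.toBlocks₂₁ *ᵥ x + S.toBlocks₂₂ *ᵥ y) := by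
  nth_rw 1 [← fromBlocks_toBlocks S]
  rw [fromBlocks_mulVec, Sum.elim_comp_inl, Sum.elim_comp_inr]

/-- The extension by zero `J z = (0, z)` of a vector of boundary values to the bulk degrees of
freedom, the discrete counterpart of a right inverse of the trace. -/
def zeroExtend (z : n → ℝ) : m ⊕ n → ℝ := Sum.elim 0 z

lemma dotProduct_zeroExtend (x : m ⊕ n → ℝ) (z : n → ℝ) :
    x ⬝ᵥ zeroExtend z = (x ∘ Sum.inr) ⬝ᵥ z := by
  rw [← Sum.elim_comp_inl_inr x, zeroExtend, sumElim_dotProduct_sumElim, dotProduct_zero, zero_add,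
    Sum.elim_comp_inr]

lemma vecNormSq_zeroExtend (S : Matrix (m ⊕ n) (m ⊕ n) ℝ) (z : n → ℝ) :
    vecNormSq S (zeroExtend z) = vecNormSq S.toBlocks₂₂ z := by
  rw [vecNormSq, zeroExtend, mulVec_sumElim, sumElim_dotProduct_sumElim, zero_dotProduct,
    zero_add, mulVec_zero, zero_add, vecNormSq]

/-- The iterates of the fully discrete bulk–surface Lie splitting scheme. The bulk mass and
stiffness matrices `M` and `A` are indexed by `m ⊕ n`, with `m` the interior and `n` the boundary
degrees of freedom; `dp k` is the discrete derivative `∂_τ pᵏ`, whose value at `k = 0` is free. -/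
structure IsLieSplitting (M A : Matrix (m ⊕ n) (m ⊕ n) ℝ) (MΓ AΓ : Matrix n n ℝ) (τ : ℝ)
    (u₁ f₁ : ℕ → m → ℝ) (p dp f₂ fΓ : ℕ → n → ℝ) : Prop where
  dp_succ : ∀ k, dp (k + 1) = τ⁻¹ • (p (k + 1) - p k)
  bulk_step : ∀ k, M.toBlocks₁₁ *ᵥ (τ⁻¹ • (u₁ (k + 1) - u₁ k)) + A.toBlocks₁₁ *ᵥ u₁ (k + 1) =
    f₁ (k + 1) - M.toBlocks₁₂ *ᵥ dp k - A.toBlocks₁₂ *ᵥ p k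
  surface_step : ∀ k, MΓ *ᵥ dp (k + 1) + AΓ *ᵥ p (k + 1) =
    fΓ (k + 1) + f₂ (k + 1) - M.toBlocks₂₂ *ᵥ dp k - A.toBlocks₂₂ *ᵥ p k -
      M.toBlocks₂₁ *ᵥ (τ⁻¹ • (u₁ (k + 1) - u₁ k)) - A.toBlocks₂₁ *ᵥ u₁ (k + 1)

/-- The energy `‖u‖_A² + ‖p‖_{A_Γ}² + 2τ ‖q‖_{M₂₂}²` of a state `u = (u₁, p)` with discrete
derivative `q = ∂_τ p` on the boundary; the last term pays for the lag of `∂_τ p`. -/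
noncomputable def splittingEnergy (M A : Matrix (m ⊕ n) (m ⊕ n) ℝ) (AΓ : Matrix n n ℝ) (τ : ℝ)
    (u : m ⊕ n → ℝ) (q : n → ℝ) : ℝ :=
  vecNormSq A u + vecNormSq AΓ (u ∘ Sum.inr) + 2 * τ * vecNormSq M.toBlocks₂₂ q

/-- The dissipation of `splittingEnergy` at discrete derivative `q`: the surface mass term of the
implicit Euler method reduced by the two splitting defects, where `4 = 2 + 2` counts the lag of
`∂_τ p` in the current step and, through `splittingEnergy`, in the next one. It may be negative. -/
noncomputable def splittingDissipation (M₂₂ A₂₂ MΓ : Matrix n n ℝ) (τ : ℝ) (q : n → ℝ) : ℝ :=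
  vecNormSq MΓ q - 4 * vecNormSq M₂₂ q - τ * vecNormSq A₂₂ q

lemma mul_vecNormSq_le_splittingDissipation {M₂₂ A₂₂ MΓ : Matrix n n ℝ}
    {τ h cM cinv αΩ : ℝ} (hτ : 0 ≤ τ) (hh : 0 < h) (hcinv : 0 ≤ cinv) (hαΩ : 0 ≤ αΩ) {z : n → ℝ}
    (hmass : vecNormSq M₂₂ z ≤ cM * h * vecNormSq MΓ z)
    (hinv : vecNormSq A₂₂ z ≤ (αΩ + cinv / h ^ 2) * vecNormSq M₂₂ z) :
    (1 - 4 * cM * h - (cM * αΩ) * τ * h - (cM * cinv) * τ / h) * vecNormSq MΓ z ≤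
      splittingDissipation M₂₂ A₂₂ MΓ τ z := by
  have stiffness_defect : τ * vecNormSq A₂₂ z ≤
      ((cM * αΩ) * τ * h + (cM * cinv) * τ / h) * vecNormSq MΓ z :=
    calc τ * vecNormSq A₂₂ z
        ≤ τ * ((αΩ + cinv / h ^ 2) * (cM * h * vecNormSq MΓ z)) := by grw [hinv, hmass]
      _ = ((cM * αΩ) * τ * h + (cM * cinv) * τ / h) * vecNormSq MΓ z := by field_simp
  rw [splittingDissipation]
  linarith

lemma splittingEnergy_step [DecidableEq m] [DecidableEq n] {MΓ AΓ : Matrix n n ℝ}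
    (hM : M.PosDef) (hA : A.PosSemidef) (hMΓ : MΓ.PosDef) (hAΓ : AΓ.PosSemidef)
    {τ : ℝ} (hτ : 0 ≤ τ) {u u' v f : m ⊕ n → ℝ} {z q g : n → ℝ}
    (hv : τ • v = u' - u) (hz : v ∘ Sum.inr = z)
    (lagged_euler : M *ᵥ (v - zeroExtend (z - q)) + A *ᵥ (u' - τ • zeroExtend z) +
      zeroExtend (MΓ *ᵥ z + AΓ *ᵥ (u' ∘ Sum.inr)) = f + zeroExtend g) :
    splittingEnergy M A AΓ τ u' z + τ * splittingDissipation M.toBlocks₂₂ A.toBlocks₂₂ MΓ τ z ≤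
      splittingEnergy M A AΓ τ u q + τ * (vecNormSq M⁻¹ f + vecNormSq MΓ⁻¹ g) := by
  have tested : v ⬝ᵥ M *ᵥ (v - zeroExtend (z - q)) + v ⬝ᵥ A *ᵥ (u' - τ • zeroExtend z) +
      (vecNormSq MΓ z + z ⬝ᵥ AΓ *ᵥ (u' ∘ Sum.inr)) = v ⬝ᵥ f + z ⬝ᵥ g := by
    simpa only [dotProduct_add, dotProduct_zeroExtend, hz, vecNormSq] using
      congrArg (v ⬝ᵥ ·) lagged_euler
  have stiffness : vecNormSq A u' - vecNormSq A u - τ ^ 2 * vecNormSq A.toBlocks₂₂ z ≤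
      2 * (τ * (v ⬝ᵥ A *ᵥ (u' - τ • zeroExtend z))) := by
    simpa only [← hv, smul_dotProduct, smul_eq_mul, vecNormSq_smul, vecNormSq_zeroExtend] using
      vecNormSq_sub_sub_le_two_mul_dotProduct hA u' u (τ • zeroExtend z)
  have surface_stiffness : vecNormSq AΓ (u' ∘ Sum.inr) - vecNormSq AΓ (u ∘ Sum.inr) ≤
      2 * (τ * (z ⬝ᵥ AΓ *ᵥ (u' ∘ Sum.inr))) := by
    have hp : u' ∘ Sum.inr - u ∘ Sum.inr = τ • z := by
      rw [← hz]
      exact congrArg (· ∘ Sum.inr) hv.symm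
    simpa only [hp, smul_dotProduct, smul_eq_mul, vecNormSq_zero, sub_zero] using
      vecNormSq_sub_sub_le_two_mul_dotProduct hAΓ (u' ∘ Sum.inr) (u ∘ Sum.inr) 0
  have mass : vecNormSq M v - vecNormSq M.toBlocks₂₂ (z - q) ≤
      2 * (v ⬝ᵥ M *ᵥ (v - zeroExtend (z - q))) := by
    simpa only [sub_zero, vecNormSq_zero, vecNormSq_zeroExtend] using
      vecNormSq_sub_sub_le_two_mul_dotProduct hM.posSemidef v 0 (zeroExtend (z - q))
  have lag : vecNormSq M.toBlocks₂₂ (z - q) ≤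
      2 * vecNormSq M.toBlocks₂₂ z + 2 * vecNormSq M.toBlocks₂₂ q :=
    vecNormSq_sub_le (hM.posSemidef.submatrix Sum.inr) z q
  have young := two_mul_dotProduct_le_vecNormSq_add_vecNormSq_inv hM v f
  have surface_young := two_mul_dotProduct_le_vecNormSq_add_vecNormSq_inv hMΓ z g
  simp only [splittingEnergy, splittingDissipation]
  linear_combination stiffness + surface_stiffness + τ * mass + τ * lag + τ * young +
    τ * surface_young + 2 * τ * tested

namespace IsLieSplitting

variable {MΓ AΓ : Matrix n n ℝ} {τ : ℝ} {u₁ f₁ : ℕ → m → ℝ} {p dp f₂ fΓ : ℕ → n → ℝ}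

lemma p_succ (hτ : τ ≠ 0) (h : IsLieSplitting M A MΓ AΓ τ u₁ f₁ p dp f₂ fΓ) (k : ℕ) :
    p (k + 1) = p k + τ • dp (k + 1) := by
  rw [h.dp_succ, smul_inv_smul₀ hτ, add_sub_cancel]

lemma lagged_euler (hτ : τ ≠ 0) (h : IsLieSplitting M A MΓ AΓ τ u₁ f₁ p dp f₂ fΓ) (k : ℕ) :
    M *ᵥ (Sum.elim (τ⁻¹ • (u₁ (k + 1) - u₁ k)) (dp (k + 1)) - zeroExtend (dp (k + 1) - dp k)) +
        A *ᵥ (Sum.elim (u₁ (k + 1)) (p (k + 1)) - τ • zeroExtend (dp (k + 1))) +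
        zeroExtend (MΓ *ᵥ dp (k + 1) + AΓ *ᵥ p (k + 1)) =
      Sum.elim (f₁ (k + 1)) (f₂ (k + 1)) + zeroExtend (fΓ (k + 1)) := by
  have lagged_velocity (d : m → ℝ) :
      Sum.elim d (dp (k + 1)) - zeroExtend (dp (k + 1) - dp k) = Sum.elim d (dp k) := by
    ext (i | i) <;> simp [zeroExtend]
  have lagged_state :
      Sum.elim (u₁ (k + 1)) (p (k + 1)) - τ • zeroExtend (dp (k + 1)) =
        Sum.elim (u₁ (k + 1)) (p k) := by
    rw [h.p_succ hτ]
    ext (i | i) <;> simp [zeroExtend]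
  rw [lagged_velocity, lagged_state, mulVec_sumElim, mulVec_sumElim]
  ext (i | i)
  · have bulk := congrFun (h.bulk_step k) i
    simp only [zeroExtend, Pi.add_apply, Pi.sub_apply, Pi.zero_apply, Sum.elim_inl] at bulk ⊢
    linarith
  · have surface := congrFun (h.surface_step k) i
    simp only [zeroExtend, Pi.add_apply, Pi.sub_apply, Sum.elim_inr] at surface ⊢
    linarith

theorem splittingEnergy_add_sum_le [DecidableEq m] [DecidableEq n] (hM : M.PosDef)
    (hA : A.PosSemidef) (hMΓ : MΓ.PosDef) (hAΓ : AΓ.PosSemidef) (hτ : 0 < τ)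
    (h : IsLieSplitting M A MΓ AΓ τ u₁ f₁ p dp f₂ fΓ) (N : ℕ) :
    splittingEnergy M A AΓ τ (Sum.elim (u₁ N) (p N)) (dp N) +
        τ * ∑ k ∈ range N, splittingDissipation M.toBlocks₂₂ A.toBlocks₂₂ MΓ τ (dp (k + 1)) ≤
      splittingEnergy M A AΓ τ (Sum.elim (u₁ 0) (p 0)) (dp 0) +
        τ * ∑ k ∈ range N, (vecNormSq M⁻¹ (Sum.elim (f₁ (k + 1)) (f₂ (k + 1))) +
          vecNormSq MΓ⁻¹ (fΓ (k + 1))) := by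
  rw [mul_sum, mul_sum]
  refine add_sum_range_le_add_sum_range
    (E := fun k ↦ splittingEnergy M A AΓ τ (Sum.elim (u₁ k) (p k)) (dp k)) (fun k ↦ ?_) N
  have increment : τ • Sum.elim (τ⁻¹ • (u₁ (k + 1) - u₁ k)) (dp (k + 1)) =
      Sum.elim (u₁ (k + 1)) (p (k + 1)) - Sum.elim (u₁ k) (p k) := by
    rw [h.p_succ hτ.ne']
    ext (i | i) <;> simp [hτ.ne']
  exact splittingEnergy_step hM hA hMΓ hAΓ hτ.le increment (Sum.elim_comp_inr _ _)
    (h.lagged_euler hτ.ne' k)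

end IsLieSplitting

theorem lie_splitting_stability_general [DecidableEq m] [DecidableEq n] {MΓ AΓ : Matrix n n ℝ}
    (hM : M.PosDef) (hA : A.PosSemidef) (hMΓ : MΓ.PosDef) (hAΓ : AΓ.PosSemidef)
    {τ h cM cinv αΩ : ℝ} (hτ : 0 < τ) (hh : 0 < h) (hcinv : 0 ≤ cinv) (hαΩ : 0 ≤ αΩ)
    (hmass : ∀ z, vecNormSq M.toBlocks₂₂ z ≤ cM * h * vecNormSq MΓ z)
    (hinv : ∀ z, vecNormSq A.toBlocks₂₂ z ≤ (αΩ + cinv / h ^ 2) * vecNormSq M.toBlocks₂₂ z)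
    {u₁ f₁ : ℕ → m → ℝ} {p dp f₂ fΓ : ℕ → n → ℝ}
    (hsplit : IsLieSplitting M A MΓ AΓ τ u₁ f₁ p dp f₂ fΓ) (N : ℕ) :
    vecNormSq A (Sum.elim (u₁ N) (p N)) + vecNormSq AΓ (p N) +
        τ * ∑ k ∈ range N, (1 - 4 * cM * h - (cM * αΩ) * τ * h - (cM * cinv) * τ / h) *
          vecNormSq MΓ (dp (k + 1)) ≤
      vecNormSq A (Sum.elim (u₁ 0) (p 0)) + vecNormSq AΓ (p 0) +
        2 * τ * vecNormSq M.toBlocks₂₂ (dp 0) +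
        τ * ∑ k ∈ range N, (vecNormSq M⁻¹ (Sum.elim (f₁ (k + 1)) (f₂ (k + 1))) +
          vecNormSq MΓ⁻¹ (fΓ (k + 1))) := by
  have energy := hsplit.splittingEnergy_add_sum_le hM hA hMΓ hAΓ hτ N
  have final_lag : 0 ≤ 2 * τ * vecNormSq M.toBlocks₂₂ (dp N) :=
    mul_nonneg (by positivity) (vecNormSq_nonneg (hM.posSemidef.submatrix Sum.inr) _)
  have dissipation : τ * ∑ k ∈ range N,
      (1 - 4 * cM * h - (cM * αΩ) * τ * h - (cM * cinv) * τ / h) * vecNormSq MΓ (dp (k + 1)) ≤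
        τ * ∑ k ∈ range N, splittingDissipation M.toBlocks₂₂ A.toBlocks₂₂ MΓ τ (dp (k + 1)) := by
    gcongr
    exact mul_vecNormSq_le_splittingDissipation hτ.le hh hcinv hαΩ (hmass _) (hinv _)
  simp only [splittingEnergy, Sum.elim_comp_inr] at energy
  linarith

end Blocks

/-- **Stability of the fully discrete bulk–surface Lie splitting (Lemma 4.2, linear case).**
Under the weak CFL condition `7 c_inv c_M τ < 3 h`, the iterates of the Lie splitting
scheme satisfy the discrete energy estimate. -/
theorem lie_splitting_stability
    (N₁ N₂ : ℕ) (hN₁ : 0 < N₁) (hN₂ : 0 < N₂)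
    (M₁₁ A₁₁ : Matrix (Fin N₁) (Fin N₁) ℝ)
    (M₁₂ A₁₂ : Matrix (Fin N₁) (Fin N₂) ℝ)
    (M₂₁ A₂₁ : Matrix (Fin N₂) (Fin N₁) ℝ)
    (M₂₂ A₂₂ MΓ AΓ : Matrix (Fin N₂) (Fin N₂) ℝ)
    (hM : (Matrix.fromBlocks M₁₁ M₁₂ M₂₁ M₂₂).PosDef)
    (hA : (Matrix.fromBlocks A₁₁ A₁₂ A₂₁ A₂₂).PosSemidef)
    (hM21 : M₂₁ = M₁₂ᵀ) (hA21 : A₂₁ = A₁₂ᵀ)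
    (hMΓ : MΓ.PosDef) (hAΓ : AΓ.PosSemidef)
    -- constants
    (τ h cM cinv αΩ : ℝ)
    (hτ : 0 < τ) (hh : 0 < h) (hcM : 0 < cM) (hcinv : 0 < cinv) (hαΩ : 0 ≤ αΩ)
    -- boundary mass estimate
    (hmass : ∀ z : Fin N₂ → ℝ, vecNormSq M₂₂ z ≤ cM * h * vecNormSq MΓ z)
    -- inverse estimate
    (hinv : ∀ z : Fin N₂ → ℝ, vecNormSq A₂₂ z ≤ (αΩ + cinv / h ^ 2) * vecNormSq M₂₂ z)
    -- weak CFL condition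
    (hCFL : 7 * cinv * cM * τ < 3 * h)
    -- the discrete sequences and data
    (u₁ f₁ : ℕ → Fin N₁ → ℝ) (p dtp f₂ fΓ : ℕ → Fin N₂ → ℝ)
    -- discrete time derivative of p (with dtp 0 the prescribed initial value ∂_τ p⁰)
    (hdtp : ∀ n : ℕ, dtp (n + 1) = τ⁻¹ • (p (n + 1) - p n))
    -- the bulk step of the Lie splitting scheme
    (hscheme₁ : ∀ n : ℕ,
      M₁₁.mulVec (τ⁻¹ • (u₁ (n + 1) - u₁ n)) + A₁₁.mulVec (u₁ (n + 1)) =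
        f₁ (n + 1) - M₁₂.mulVec (dtp n) - A₁₂.mulVec (p n))
    -- the surface step of the Lie splitting scheme
    (hscheme₂ : ∀ n : ℕ,
      MΓ.mulVec (dtp (n + 1)) + AΓ.mulVec (p (n + 1)) =
        fΓ (n + 1) + f₂ (n + 1) - M₂₂.mulVec (dtp n) - A₂₂.mulVec (p n)
          - M₂₁.mulVec (τ⁻¹ • (u₁ (n + 1) - u₁ n)) - A₂₁.mulVec (u₁ (n + 1))) :
    ∀ n : ℕ,
      vecNormSq (Matrix.fromBlocks A₁₁ A₁₂ A₂₁ A₂₂) (Sum.elim (u₁ (n + 1)) (p (n + 1)))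
        + vecNormSq AΓ (p (n + 1))
        + τ * ∑ k ∈ Finset.range (n + 1),
            (1 - 4 * cM * h - (cM * αΩ) * τ * h - (cM * cinv) * τ / h)
              * vecNormSq MΓ (dtp (k + 1))
      ≤ vecNormSq (Matrix.fromBlocks A₁₁ A₁₂ A₂₁ A₂₂) (Sum.elim (u₁ 0) (p 0))
        + vecNormSq AΓ (p 0)
        + 2 * τ * vecNormSq M₂₂ (dtp 0)
        + τ * ∑ k ∈ Finset.range (n + 1),
            (vecNormSq (Matrix.fromBlocks M₁₁ M₁₂ M₂₁ M₂₂)⁻¹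
                (Sum.elim (f₁ (k + 1)) (f₂ (k + 1)))
              + vecNormSq MΓ⁻¹ (fΓ (k + 1))) :=
  fun n ↦ lie_splitting_stability_general hM hA hMΓ hAΓ hτ hh hcinv.le hαΩ hmass hinv
    ⟨hdtp, hscheme₁, hscheme₂⟩ (n + 1)
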